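/- arXiv:math/0607286 — 2 statements merged into one kernel-verified Lean document; each statement's English description precedes it below -/
import Mathlib

section
/- The number of lattice points of a Gorenstein simplicial cone at each level is a sum of binomial coefficients indexed by the box: assuming d ≥ 1, for every natural number j, the cardinality of {v ∈ σ ∩ ℤⁿ : f(v) = j} equals the sum, over all b ∈ Box(σ) with f(b) ≤ j, of the binomial coefficient C(j − f(b) + d − 1, d − 1). -/
/-- The canonical embedding of `ℤⁿ` into `ℝⁿ`. -/
noncomputable def toR (n : ℕ) (w : Fin n → ℤ) : Fin n → ℝ := fun k => (w k : ℝ)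

/-- The simplicial cone generated by the lattice vectors `v 0, …, v (d-1)`. -/
noncomputable def Cone (n d : ℕ) (v : Fin d → Fin n → ℤ) : Set (Fin n → ℝ) :=
  {x | ∃ α : Fin d → ℝ, (∀ i, 0 ≤ α i) ∧ x = ∑ i, α i • toR n (v i)}

/-- The box of the simplicial cone generated by `v 0, …, v (d-1)`. -/
noncomputable def Box (n d : ℕ) (v : Fin d → Fin n → ℤ) : Set (Fin n → ℤ) :=
  {w | ∃ α : Fin d → ℝ, (∀ i, 0 ≤ α i ∧ α i < 1) ∧ toR n w = ∑ i, α i • toR n (v i)}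

/-! Rounding down the coefficients of a lattice point of the cone writes it uniquely as a box
element plus a combination of the generators with coefficients in `ℕ`. Each generator raises the
level by one, so over a box element of level `m` the points of level `j` correspond to the ways of
writing `j - m` as an ordered sum of `d` natural numbers. -/

lemma multichoose_eq_choose_sub_one {d : ℕ} (hd : 1 ≤ d) (k : ℕ) :
    d.multichoose k = (k + d - 1).choose (d - 1) := by
  rw [Nat.multichoose_eq, add_comm d k]
  exact Nat.choose_symm_of_eq_add (by omega)

lemma finite_setOf_sum_eq (ι : Type*) [Fintype ι] (k : ℕ) : {c : ι → ℕ | ∑ i, c i = k}.Finite := by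
  classical exact .of_equiv (Sym ι k) (Sym.equivNatSumOfFintype ι k)

lemma ncard_setOf_sum_eq (ι : Type*) [Fintype ι] (k : ℕ) :
    {c : ι → ℕ | ∑ i, c i = k}.ncard = (Fintype.card ι).multichoose k := by
  classical
  rw [← Nat.card_coe_set_eq, ← Nat.card_eq_fintype_card, ← Sym.natCard_sym_eq_multichoose]
  exact Nat.card_congr (Sym.equivNatSumOfFintype ι k).symm

lemma map_sum_smul_of_map_eq_one {ι R M : Type*} [Fintype ι] [Semiring R] [AddCommMonoid M]
    [Module R M] {f : M →ₗ[R] R} {u : ι → M} (hf : ∀ i, f (u i) = 1) (α : ι → R) :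
    f (∑ i, α i • u i) = ∑ i, α i := by
  simp [hf]

lemma le_of_add_natCast_eq {K : Type*} [Semiring K] [PartialOrder K] [IsStrictOrderedRing K]
    {x y : K} (hx : 0 ≤ x) (hy : y < 1) {m k : ℕ} (h : x + m = y + k) : m ≤ k := by
  have hlt : (m : K) < 1 + k := calc
    (m : K) ≤ x + m := le_add_of_nonneg_left hx
    _ = y + k := h
    _ < 1 + k := by gcongr
  rw [add_comm] at hlt
  exact Nat.lt_succ_iff.1 (mod_cast hlt)

lemma eq_of_sum_add_natCast_smul_eq {ι K M : Type*} [Fintype ι] [Semiring K] [PartialOrder K]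
    [IsStrictOrderedRing K] [AddCommMonoid M] [Module K M] {u : ι → M}
    (hu : LinearIndependent K u) {α β : ι → K} (hα : ∀ i, 0 ≤ α i ∧ α i < 1)
    (hβ : ∀ i, 0 ≤ β i ∧ β i < 1) {c c' : ι → ℕ}
    (h : ∑ i, (α i + c i) • u i = ∑ i, (β i + c' i) • u i) : c = c' := by
  have hcoeff : (fun i => α i + (c i : K)) = fun i => β i + (c' i : K) :=
    hu.fintypeLinearCombination_injective h
  funext i
  have hi : α i + c i = β i + c' i := congrFun hcoeff i
  exact (le_of_add_natCast_eq (hα i).1 (hβ i).2 hi).antisymm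
    (le_of_add_natCast_eq (hβ i).1 (hα i).2 hi.symm)

section Decomposition

variable {n d : ℕ} {v : Fin d → Fin n → ℤ}

/-- The translate of a lattice point `q.1` (in practice a box element) by the combination of the
generators with coefficients `q.2`. -/
def boxTranslate (v : Fin d → Fin n → ℤ) (q : (Fin n → ℤ) × (Fin d → ℕ)) : Fin n → ℤ :=
  q.1 + ∑ i, q.2 i • v i

lemma toR_boxTranslate (b : Fin n → ℤ) (c : Fin d → ℕ) :
    toR n (boxTranslate v (b, c)) = toR n b + ∑ i, (c i : ℝ) • toR n (v i) := by
  ext k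
  simp [toR, boxTranslate, Finset.sum_apply]

lemma toR_boxTranslate_of_toR_eq {b : Fin n → ℤ} {α : Fin d → ℝ}
    (hb : toR n b = ∑ i, α i • toR n (v i)) (c : Fin d → ℕ) :
    toR n (boxTranslate v (b, c)) = ∑ i, (α i + c i) • toR n (v i) := by
  simp only [toR_boxTranslate, hb, add_smul, Finset.sum_add_distrib]

lemma mapsTo_boxTranslate :
    Set.MapsTo (boxTranslate v) (Box n d v ×ˢ Set.univ) {w | toR n w ∈ Cone n d v} := by
  rintro ⟨b, c⟩ ⟨⟨α, hα, hb⟩, -⟩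
  exact ⟨_, fun i => add_nonneg (hα i).1 (c i).cast_nonneg, toR_boxTranslate_of_toR_eq hb c⟩

lemma surjOn_boxTranslate :
    Set.SurjOn (boxTranslate v) (Box n d v ×ˢ Set.univ) {w | toR n w ∈ Cone n d v} := by
  rintro w ⟨α, hα, hw⟩
  let c : Fin d → ℕ := fun i => ⌊α i⌋₊
  let b : Fin n → ℤ := w - ∑ i, c i • v i
  have hbc : boxTranslate v (b, c) = w := sub_add_cancel _ _
  have hb : toR n b = ∑ i, (α i - c i) • toR n (v i) := by
    simp only [sub_smul, Finset.sum_sub_distrib]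
    rw [← hw, ← hbc, toR_boxTranslate, add_sub_cancel_right]
  have hfract (i : Fin d) : 0 ≤ α i - c i ∧ α i - c i < 1 :=
    ⟨sub_nonneg.2 (Nat.floor_le (hα i)), sub_lt_iff_lt_add'.2 (Nat.lt_floor_add_one (α i))⟩
  exact ⟨(b, c), ⟨⟨_, hfract, hb⟩, trivial⟩, hbc⟩

lemma injOn_boxTranslate (hli : LinearIndependent ℝ (fun i => toR n (v i))) :
    Set.InjOn (boxTranslate v) (Box n d v ×ˢ Set.univ) := by
  rintro ⟨b, c⟩ ⟨⟨α, hα, hb⟩, -⟩ ⟨b', c'⟩ ⟨⟨β, hβ, hb'⟩, -⟩ h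
  have hc : c = c' := eq_of_sum_add_natCast_smul_eq hli hα hβ <| by
    rw [← toR_boxTranslate_of_toR_eq hb, ← toR_boxTranslate_of_toR_eq hb', h]
  subst hc
  exact congrArg (·, c) (add_right_cancel h)

lemma abs_apply_le_of_mem_box {w : Fin n → ℤ} (hw : w ∈ Box n d v) (k : Fin n) :
    |w k| ≤ ∑ i, |v i k| := by
  obtain ⟨α, hα, hw⟩ := hw
  have hwk : (w k : ℝ) = ∑ i, α i * v i k := by
    simpa [toR, Finset.sum_apply] using congrFun hw k
  have habs : |(w k : ℝ)| ≤ ∑ i, |(v i k : ℝ)| := calc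
    |(w k : ℝ)| ≤ ∑ i, |α i * v i k| := hwk ▸ Finset.abs_sum_le_sum_abs _ _
    _ ≤ ∑ i, |(v i k : ℝ)| := Finset.sum_le_sum fun i _ => by
      rw [abs_mul, abs_of_nonneg (hα i).1]
      exact mul_le_of_le_one_left (abs_nonneg _) (hα i).2.le
  exact_mod_cast habs

lemma finite_box (v : Fin d → Fin n → ℤ) : (Box n d v).Finite :=
  (Set.finite_Icc (fun k => -∑ i, |v i k|) (fun k => ∑ i, |v i k|)).subset fun _ hw =>
    ⟨fun k => (abs_le.1 (abs_apply_le_of_mem_box hw k)).1,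
      fun k => (abs_le.1 (abs_apply_le_of_mem_box hw k)).2⟩

end Decomposition

section Grading

variable {n d : ℕ} {v : Fin d → Fin n → ℤ} {f : (Fin n → ℝ) →ₗ[ℝ] ℝ}

/-- The lattice points of the cone at level `j` of `f`. -/
def gradedPiece (v : Fin d → Fin n → ℤ) (f : (Fin n → ℝ) →ₗ[ℝ] ℝ) (j : ℕ) : Set (Fin n → ℤ) :=
  {w | toR n w ∈ Cone n d v ∧ f (toR n w) = j}

/-- The box elements whose level is a natural number at most `j`, each paired with that level.
A box element of non-integral level can be left out: no point of integral level lies over it. -/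
def gradedBox (v : Fin d → Fin n → ℤ) (f : (Fin n → ℝ) →ₗ[ℝ] ℝ) (j : ℕ) :
    Set ((Fin n → ℤ) × ℕ) :=
  {p | p.1 ∈ Box n d v ∧ f (toR n p.1) = p.2 ∧ p.2 ≤ j}

lemma finite_gradedBox (v : Fin d → Fin n → ℤ) (f : (Fin n → ℝ) →ₗ[ℝ] ℝ) (j : ℕ) :
    (gradedBox v f j).Finite :=
  ((finite_box v).prod (Set.finite_Iic j)).subset fun _ hp => ⟨hp.1, hp.2.2⟩

lemma map_toR_nonneg_of_mem_box (hf : ∀ i, f (toR n (v i)) = 1) {b : Fin n → ℤ}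
    (hb : b ∈ Box n d v) : 0 ≤ f (toR n b) := by
  obtain ⟨α, hα, hb⟩ := hb
  rw [hb, map_sum_smul_of_map_eq_one hf]
  exact Finset.sum_nonneg fun i _ => (hα i).1

lemma map_toR_boxTranslate (hf : ∀ i, f (toR n (v i)) = 1) (b : Fin n → ℤ) (c : Fin d → ℕ) :
    f (toR n (boxTranslate v (b, c))) = f (toR n b) + (∑ i, c i : ℕ) := by
  rw [toR_boxTranslate, map_add, map_sum_smul_of_map_eq_one hf, Nat.cast_sum]

lemma gradedPiece_eq_biUnion (hf : ∀ i, f (toR n (v i)) = 1) (j : ℕ) :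
    gradedPiece v f j = ⋃ p ∈ gradedBox v f j,
      (fun c => boxTranslate v (p.1, c)) '' {c | ∑ i, c i = j - p.2} := by
  ext w
  simp only [Set.mem_iUnion₂]
  constructor
  · rintro ⟨hw, hlevel⟩
    obtain ⟨⟨b, c⟩, ⟨hb, -⟩, rfl⟩ := surjOn_boxTranslate hw
    rw [map_toR_boxTranslate hf] at hlevel
    have hle : ∑ i, c i ≤ j := by
      have := map_toR_nonneg_of_mem_box hf hb
      exact_mod_cast (by linarith : ((∑ i, c i : ℕ) : ℝ) ≤ j)
    have hfb : f (toR n b) = (j - ∑ i, c i : ℕ) := by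
      rw [Nat.cast_sub hle, ← hlevel, add_sub_cancel_right]
    exact ⟨(b, j - ∑ i, c i), ⟨hb, hfb, Nat.sub_le _ _⟩, c, (Nat.sub_sub_self hle).symm, rfl⟩
  · rintro ⟨⟨b, m⟩, ⟨hb, hfb, hm⟩, c, hc, rfl⟩
    refine ⟨mapsTo_boxTranslate ⟨hb, trivial⟩, ?_⟩
    rw [map_toR_boxTranslate hf, hfb, hc, ← Nat.cast_add, Nat.add_sub_cancel' hm]

lemma pairwiseDisjoint_image_boxTranslate (hli : LinearIndependent ℝ (fun i => toR n (v i)))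
    (f : (Fin n → ℝ) →ₗ[ℝ] ℝ) (j : ℕ) (s : (Fin n → ℤ) × ℕ → Set (Fin d → ℕ)) :
    (gradedBox v f j).PairwiseDisjoint fun p => (fun c => boxTranslate v (p.1, c)) '' s p := by
  refine fun p hp q hq hpq => Set.disjoint_left.2 ?_
  rintro _ ⟨c, -, rfl⟩ ⟨c', -, h⟩
  have hbox : q.1 = p.1 :=
    (Prod.mk.inj (injOn_boxTranslate hli ⟨hq.1, trivial⟩ ⟨hp.1, trivial⟩ h)).1
  have hlevel : (p.2 : ℝ) = q.2 := by rw [← hp.2.1, ← hq.2.1, hbox]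
  exact hpq (Prod.ext hbox.symm (Nat.cast_injective hlevel))

lemma ncard_image_boxTranslate (hli : LinearIndependent ℝ (fun i => toR n (v i)))
    {b : Fin n → ℤ} (hb : b ∈ Box n d v) (s : Set (Fin d → ℕ)) :
    ((fun c => boxTranslate v (b, c)) '' s).ncard = s.ncard :=
  Set.InjOn.ncard_image fun _ _ _ _ h =>
    congrArg Prod.snd (injOn_boxTranslate hli ⟨hb, trivial⟩ ⟨hb, trivial⟩ h)

theorem graded_piece_card_general (hli : LinearIndependent ℝ (fun i => toR n (v i)))
    (hf : ∀ i, f (toR n (v i)) = 1) (j : ℕ) :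
    (gradedPiece v f j).ncard = ∑ᶠ p ∈ gradedBox v f j, d.multichoose (j - p.2) := by
  rw [gradedPiece_eq_biUnion hf, (finite_gradedBox v f j).ncard_biUnion
    (fun _ _ => (finite_setOf_sum_eq _ _).image _) (pairwiseDisjoint_image_boxTranslate hli f j _)]
  refine finsum_mem_congr rfl fun p hp => ?_
  rw [ncard_image_boxTranslate hli hp.1, ncard_setOf_sum_eq, Fintype.card_fin]

end Grading

/-- The number of lattice points of a Gorenstein simplicial cone at level `j` is the sum,
over the box elements `b` with `f b ≤ j`, of the binomial coefficients
`C(j - f b + d - 1, d - 1)`.  (Box elements are encoded as pairs `(b, m)` with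
`m : ℕ` the value of the Gorenstein function at `b`.) -/
theorem graded_piece_card (n d : ℕ) (hd : 1 ≤ d) (v : Fin d → Fin n → ℤ)
    (hli : LinearIndependent ℝ (fun i => toR n (v i)))
    (f : (Fin n → ℝ) →ₗ[ℝ] ℝ)
    (hf1 : ∀ i, f (toR n (v i)) = 1)
    (hfint : ∀ w : Fin n → ℤ, toR n w ∈ Cone n d v → ∃ k : ℤ, f (toR n w) = k)
    (j : ℕ) :
    {w : Fin n → ℤ | toR n w ∈ Cone n d v ∧ f (toR n w) = j}.ncard =
      ∑ᶠ p ∈ {p : (Fin n → ℤ) × ℕ | p.1 ∈ Box n d v ∧ f (toR n p.1) = p.2 ∧ p.2 ≤ j},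
        Nat.choose (j - p.2 + d - 1) (d - 1) :=
  (graded_piece_card_general hli hf1 j).trans <|
    finsum_mem_congr rfl fun p _ => multichoose_eq_choose_sub_one hd (j - p.2)
end

section
/- The lattice-point generating function of a Gorenstein simplicial cone equals the box polynomial divided by (1−t)^d: in the ring of formal power series ℤ⟦t⟧, (1 − t)^d · Σ_{j≥0} #{v ∈ σ ∩ ℤⁿ : f(v) = j} · t^j = Σ_{b ∈ Box(σ)} t^{f(b)}. -/
open Filter PowerSeries

section HeightSeries

variable {M K : Type*}

/-- The generating function of the set `S` graded by the height `h`: its `j`-th coefficient is the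
number of elements of `S` of height `j`. Elements whose height is not a natural number are not
counted, and a level with infinitely many elements contributes `0`. -/
noncomputable def heightSeries [NatCast K] (h : M → K) (S : Set M) : ℤ⟦X⟧ :=
  PowerSeries.mk fun j => ({w ∈ S | h w = j}.ncard : ℤ)

theorem one_sub_X_mul_heightSeries [Ring K] [PartialOrder K] [IsStrictOrderedRing K]
    {h : M → K} {S : Set M} {T : M → M} (hT : T.Injective) (hTS : Set.MapsTo T S S)
    (hhT : ∀ w, h (T w) = h w + 1) (hS : ∀ w ∈ S, 0 ≤ h w)
    (hfin : ∀ j : ℕ, {w ∈ S | h w = j}.Finite) :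
    (1 - X) * heightSeries h S = heightSeries h (S \ T '' S) := by
  ext j
  rw [sub_mul, one_mul, map_sub]
  cases j with
  | zero =>
    have hlevel : {w ∈ S \ T '' S | h w = (0 : ℕ)} = {w ∈ S | h w = (0 : ℕ)} := by
      ext w
      refine ⟨fun ⟨hw, h0⟩ => ⟨hw.1, h0⟩, fun ⟨hw, h0⟩ => ⟨⟨hw, ?_⟩, h0⟩⟩
      rintro ⟨u, hu, rfl⟩
      have hpos : 0 < h (T u) := hhT u ▸ add_pos_of_nonneg_of_pos (hS u hu) one_pos
      exact hpos.ne' (by simpa using h0)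
    rw [coeff_zero_X_mul, sub_zero, heightSeries, heightSeries, coeff_mk, coeff_mk, hlevel]
  | succ j =>
    have hlevel : {w ∈ S \ T '' S | h w = (j + 1 : ℕ)} =
        {w ∈ S | h w = (j + 1 : ℕ)} \ T '' {w ∈ S | h w = j} := by
      ext w
      constructor
      · rintro ⟨⟨hw, hwT⟩, hj⟩
        exact ⟨⟨hw, hj⟩, fun hwT' => hwT (Set.image_mono (Set.sep_subset _ _) hwT')⟩
      · rintro ⟨⟨hw, hj⟩, hwT⟩
        refine ⟨⟨hw, ?_⟩, hj⟩
        rintro ⟨u, hu, rfl⟩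
        exact hwT ⟨u, ⟨hu, by simpa [hhT] using hj⟩, rfl⟩
    have hsub : T '' {w ∈ S | h w = j} ⊆ {w ∈ S | h w = (j + 1 : ℕ)} := by
      rintro _ ⟨u, ⟨hu, hj⟩, rfl⟩
      exact ⟨hTS hu, by rw [hhT, hj, Nat.cast_succ]⟩
    have hcard := Set.ncard_sdiff_add_ncard_of_subset hsub (hfin (j + 1))
    rw [← hlevel, Set.ncard_image_of_injective _ hT] at hcard
    rw [coeff_succ_X_mul, heightSeries, heightSeries, coeff_mk, coeff_mk, coeff_mk, ← hcard]
    push_cast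
    ring

end HeightSeries

section TruncatedCone

variable {ι K E : Type*} [Fintype ι] [Ring K] [LinearOrder K] [AddCommGroup E]
  [Module K E] {x : ι → E} {s : Finset ι} {a : ι} {y : E}

variable (K) in
/-- The points of the cone generated by `x` having nonnegative coefficients of which those indexed
by `s` are less than `1`. It interpolates between the cone itself, for `s = ∅`, and the half-open
parallelepiped spanned by `x`, for `s = Finset.univ`. -/
def truncatedCone (x : ι → E) (s : Finset ι) : Set E :=
  Fintype.linearCombination K x '' {α | 0 ≤ α ∧ ∀ i ∈ s, α i < 1}

theorem truncatedCone_antitone : Antitone (truncatedCone K x) :=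
  fun _ _ hst => Set.image_mono fun _ ⟨h0, h1⟩ => ⟨h0, fun i hi => h1 i (hst hi)⟩

theorem mem_truncatedCone_empty :
    y ∈ truncatedCone K x ∅ ↔ ∃ α : ι → K, (∀ i, 0 ≤ α i) ∧ y = ∑ i, α i • x i := by
  simp [truncatedCone, Fintype.linearCombination_apply, Pi.le_def, eq_comm]

theorem mem_truncatedCone_univ :
    y ∈ truncatedCone K x Finset.univ ↔
      ∃ α : ι → K, (∀ i, 0 ≤ α i ∧ α i < 1) ∧ y = ∑ i, α i • x i := by
  simp [truncatedCone, Fintype.linearCombination_apply, Pi.le_def, forall_and, eq_comm]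

theorem linearCombination_mem_truncatedCone_iff (hx : LinearIndependent K x) {α : ι → K} :
    Fintype.linearCombination K x α ∈ truncatedCone K x s ↔ 0 ≤ α ∧ ∀ i ∈ s, α i < 1 :=
  hx.fintypeLinearCombination_injective.mem_set_image

variable [IsStrictOrderedRing K]

theorem map_nonneg_of_mem_truncatedCone {f : E →ₗ[K] K} (hf : ∀ i, 0 ≤ f (x i))
    (hy : y ∈ truncatedCone K x s) : 0 ≤ f y := by
  obtain ⟨α, ⟨h0, -⟩, rfl⟩ := hy
  rw [Fintype.linearCombination_apply, map_sum]
  exact Finset.sum_nonneg fun i _ => by simpa using mul_nonneg (h0 i) (hf i)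

theorem add_mem_truncatedCone (ha : a ∉ s) (hy : y ∈ truncatedCone K x s) :
    y + x a ∈ truncatedCone K x s := by
  classical
  obtain ⟨α, ⟨h0, h1⟩, rfl⟩ := hy
  refine ⟨α + Pi.single a 1, ⟨add_nonneg h0 (Pi.single_nonneg.2 zero_le_one), fun i hi => ?_⟩, ?_⟩
  · simpa [ne_of_mem_of_not_mem hi ha] using h1 i hi
  · simp

theorem linearCombination_sub_mem_truncatedCone_iff (hx : LinearIndependent K x) (ha : a ∉ s)
    {α : ι → K} (hα : Fintype.linearCombination K x α ∈ truncatedCone K x s) :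
    Fintype.linearCombination K x α - x a ∈ truncatedCone K x s ↔ 1 ≤ α a := by
  classical
  have hsub : Fintype.linearCombination K x α - x a =
      Fintype.linearCombination K x (α - Pi.single a 1) := by simp
  rw [linearCombination_mem_truncatedCone_iff hx] at hα
  rw [hsub, linearCombination_mem_truncatedCone_iff hx]
  constructor
  · rintro ⟨h0, -⟩
    simpa using h0 a
  · refine fun h1 => ⟨fun i => ?_, fun i hi => ?_⟩
    · obtain rfl | hia := eq_or_ne i a
      · simpa using h1
      · simpa [hia] using hα.1 i
    · simpa [ne_of_mem_of_not_mem hi ha] using hα.2 i hi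

theorem mem_truncatedCone_insert_iff [DecidableEq ι] (hx : LinearIndependent K x) (ha : a ∉ s) :
    y ∈ truncatedCone K x (insert a s) ↔
      y ∈ truncatedCone K x s ∧ y - x a ∉ truncatedCone K x s := by
  constructor
  · intro hy
    have hys := truncatedCone_antitone (Finset.subset_insert a s) hy
    obtain ⟨α, ⟨-, h1⟩, rfl⟩ := hy
    rw [linearCombination_sub_mem_truncatedCone_iff hx ha hys, not_le]
    exact ⟨hys, h1 a (Finset.mem_insert_self a s)⟩
  · rintro ⟨⟨α, hα, rfl⟩, hya⟩
    rw [linearCombination_sub_mem_truncatedCone_iff hx ha ⟨α, hα, rfl⟩, not_le] at hya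
    exact ⟨α, ⟨hα.1, (Finset.forall_mem_insert ..).2 ⟨hya, hα.2⟩⟩, rfl⟩

theorem one_sub_X_pow_card_mul_heightSeries_truncatedCone {M : Type*} [AddCommGroup M]
    {φ : M →+ E} {v : ι → M} (hv : LinearIndependent K (φ ∘ v)) {f : E →ₗ[K] K}
    (hf : ∀ i, f (φ (v i)) = 1)
    (hfin : ∀ j : ℕ, {w ∈ φ ⁻¹' truncatedCone K (φ ∘ v) ∅ | f (φ w) = j}.Finite)
    (s : Finset ι) :
    (1 - X) ^ s.card * heightSeries (f ∘ φ) (φ ⁻¹' truncatedCone K (φ ∘ v) ∅) =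
      heightSeries (f ∘ φ) (φ ⁻¹' truncatedCone K (φ ∘ v) s) := by
  classical
  induction s using Finset.induction_on with
  | empty => rw [Finset.card_empty, pow_zero, one_mul]
  | insert a s ha ih =>
    have htranslate : φ ⁻¹' truncatedCone K (φ ∘ v) (insert a s) =
        φ ⁻¹' truncatedCone K (φ ∘ v) s \
          (· + v a) '' (φ ⁻¹' truncatedCone K (φ ∘ v) s) := by
      ext w
      simp [mem_truncatedCone_insert_iff hv ha, ← sub_eq_add_neg]
    rw [Finset.card_insert_of_notMem ha, pow_succ', mul_assoc, ih, htranslate]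
    refine one_sub_X_mul_heightSeries (add_left_injective (v a)) (fun w hw => ?_) (fun w => ?_)
      (fun w hw => map_nonneg_of_mem_truncatedCone (fun i => (hf i).symm ▸ zero_le_one) hw)
      fun j => (hfin j).subset fun w hw => ⟨truncatedCone_antitone s.empty_subset hw.1, hw.2⟩
    · simpa using add_mem_truncatedCone ha hw
    · simp [hf]

end TruncatedCone

theorem exists_isCompact_truncatedCone_inter_subset {ι E : Type*} [Fintype ι] [AddCommGroup E]
    [Module ℝ E] [TopologicalSpace E] [ContinuousAdd E] [ContinuousSMul ℝ E] {x : ι → E}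
    {f : E →ₗ[ℝ] ℝ} (hf : ∀ i, f (x i) = 1) (s : Finset ι) (c : ℝ) :
    ∃ C : Set E, IsCompact C ∧ {y ∈ truncatedCone ℝ x s | f y = c} ⊆ C := by
  refine ⟨Fintype.linearCombination ℝ x '' Set.Icc 0 (fun _ => c),
    isCompact_Icc.image (LinearMap.continuous_on_pi _), ?_⟩
  rintro _ ⟨⟨α, ⟨h0, -⟩, rfl⟩, hc⟩
  have hsum : ∑ i, α i = c := by simpa [Fintype.linearCombination_apply, hf] using hc
  exact ⟨α, ⟨h0, fun i => hsum ▸ Finset.single_le_sum (fun i _ => h0 i) (Finset.mem_univ i)⟩, rfl⟩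

theorem tendsto_toR_cofinite_cocompact (n : ℕ) : Tendsto (toR n) cofinite (cocompact _) := by
  simpa only [coprodᵢ_cofinite, coprodᵢ_cocompact] using!
    Tendsto.pi_map_coprodᵢ fun _ : Fin n => Int.tendsto_coe_cofinite

theorem ehrhart_series_eq_box_polynomial_general {ι M E : Type*} [Fintype ι] [AddCommGroup M]
    [AddCommGroup E] [Module ℝ E] [TopologicalSpace E] [ContinuousAdd E] [ContinuousSMul ℝ E]
    (φ : M →+ E) (hφ : Tendsto φ cofinite (cocompact E)) (v : ι → M)
    (hli : LinearIndependent ℝ (φ ∘ v)) (f : E →ₗ[ℝ] ℝ) (hf : ∀ i, f (φ (v i)) = 1) :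
    (1 - X) ^ Fintype.card ι *
        heightSeries (f ∘ φ) {w | ∃ α : ι → ℝ, (∀ i, 0 ≤ α i) ∧ φ w = ∑ i, α i • φ (v i)} =
      heightSeries (f ∘ φ)
        {w | ∃ α : ι → ℝ, (∀ i, 0 ≤ α i ∧ α i < 1) ∧ φ w = ∑ i, α i • φ (v i)} := by
  have hfin (j : ℕ) : {w ∈ φ ⁻¹' truncatedCone ℝ (φ ∘ v) ∅ | f (φ w) = j}.Finite := by
    obtain ⟨C, hC, hsub⟩ := exists_isCompact_truncatedCone_inter_subset (x := φ ∘ v) hf ∅ j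
    exact (tendsto_cofinite_cocompact_iff.1 hφ C hC).subset fun w hw => hsub hw
  have hcone : φ ⁻¹' truncatedCone ℝ (φ ∘ v) ∅ =
      {w | ∃ α : ι → ℝ, (∀ i, 0 ≤ α i) ∧ φ w = ∑ i, α i • φ (v i)} :=
    Set.ext fun _ => mem_truncatedCone_empty
  have hbox : φ ⁻¹' truncatedCone ℝ (φ ∘ v) Finset.univ =
      {w | ∃ α : ι → ℝ, (∀ i, 0 ≤ α i ∧ α i < 1) ∧ φ w = ∑ i, α i • φ (v i)} :=
    Set.ext fun _ => mem_truncatedCone_univ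
  rw [← hcone, ← hbox]
  exact one_sub_X_pow_card_mul_heightSeries_truncatedCone hli hf hfin Finset.univ

/-- The lattice-point generating function of a Gorenstein simplicial cone equals the box
polynomial divided by `(1 - t)^d`: in `ℤ⟦t⟧`,
`(1 - t)^d * ∑ⱼ #{v ∈ σ ∩ ℤⁿ : f v = j} tʲ = ∑_{b ∈ Box σ} t^{f b}`,
where the right-hand side is the power series whose `j`-th coefficient is
`#{b ∈ Box σ : f b = j}`. -/
theorem ehrhart_series_eq_box_polynomial (n d : ℕ) (v : Fin d → Fin n → ℤ)
    (hli : LinearIndependent ℝ (fun i => toR n (v i)))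
    (f : (Fin n → ℝ) →ₗ[ℝ] ℝ)
    (hf1 : ∀ i, f (toR n (v i)) = 1)
    (hfint : ∀ w : Fin n → ℤ, toR n w ∈ Cone n d v → ∃ k : ℤ, f (toR n w) = k) :
    (1 - PowerSeries.X : PowerSeries ℤ) ^ d *
      PowerSeries.mk (fun j =>
        ({w : Fin n → ℤ | toR n w ∈ Cone n d v ∧ f (toR n w) = j}.ncard : ℤ)) =
    PowerSeries.mk (fun j =>
        ({b ∈ Box n d v | f (toR n b) = j}.ncard : ℤ)) := by
  simpa only [Fintype.card_fin] using! ehrhart_series_eq_box_polynomial_general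
    ((Int.castAddHom ℝ).compLeft (Fin n)) (tendsto_toR_cofinite_cocompact n) v hli f hf1
end
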